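/- (Tightness part of Corollary 1.4.) There exists a constant c > 0 such that for every n₀ there exist an integer n ≥ n₀ and a hypergraph H = (V, (e_i)_{i ∈ I}) with all hyperedges nonempty and combinatorial size |V| + |I| = n, such that every partition of I into classes F_1, …, F_k in which each class F_m admits a subset U_m ⊆ V with |U_m ∩ e_i| = 1 for every i ∈ F_m must satisfy k ≥ c · (log₂ n)². -/

import Mathlib

/-!
The hyperedges are `128 ^ L` independent samples of a random vertex set `S`: a scale `j < L` is
chosen uniformly and then every one of the `4 ^ L` vertices is included with probability
`2 ^ (-(j + 1))`. Decompositions with few colors are excluded by a union bound over the families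
`U : Fin k → Finset V`: for each family with `64 * (k + 1) ≤ L ^ 2`, with probability at least
`exp (-L) / L` the set `S` is nonempty and meets no `U m` in exactly one vertex.

To see this, absorb the sets `U m` greedily: stage `i` absorbs every set having at most `16 * 2 ^ i`
vertices outside the union of those absorbed so far. A set absorbed at stage `i` costs a factor
`exp (-O(2 ^ (-|i - j|)))` at scale `j`: if `i ≤ j`, because `S` is asked to avoid the at most
`16 * 2 ^ i` vertices it contributes to the union; if `i > j`, because `S` is asked to meet its
remaining more than `16 * 2 ^ (i - 1)` vertices at least twice. The latter events are increasing, so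
Harris' inequality multiplies their probabilities. Each set costs `O(1)` summed over all scales, so
some scale has total cost `O(k / L)`, which the constant `64` brings below `L`.
-/

/-- A hypergraph given by a vertex set `Vset`, an index set `I` and a hyperedge map `e`
admits a *hypergraph bipartite decomposition* with (at most) `k` colors. -/
def HasHBD {α β : Type} [DecidableEq α] (Vset : Finset α) (I : Finset β)
    (e : β → Finset α) (k : ℕ) : Prop :=
  ∃ color : β → Fin k, ∀ m : Fin k, ∃ U ⊆ Vset,
    ∀ i ∈ I, color i = m → (U ∩ e i).card = 1

open Finset

section Correlation

variable {α ι : Type*} [DistribLattice α] [Fintype α]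

theorem prod_sum_le_sum_forall_of_monotone {μ : α → ℝ} (hμ₀ : 0 ≤ μ) (hμ₁ : ∑ a, μ a = 1)
    (hμ : ∀ a b, μ a * μ b ≤ μ (a ⊓ b) * μ (a ⊔ b)) {P : ι → α → Prop}
    [∀ i, DecidablePred (P i)] (hP : ∀ i, Monotone (P i)) (s : Finset ι) :
    ∏ i ∈ s, ∑ a with P i a, μ a ≤ ∑ a with ∀ i ∈ s, P i a, μ a := by
  classical
  have ite_nonneg (p : α → Prop) [DecidablePred p] : 0 ≤ fun a ↦ if p a then (1 : ℝ) else 0 :=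
    fun a ↦ by dsimp; split_ifs <;> norm_num
  have ite_mono (p : α → Prop) [DecidablePred p] (hp : Monotone p) :
      Monotone fun a ↦ if p a then (1 : ℝ) else 0 := fun a b hab ↦ by
    have := hp hab
    dsimp
    split_ifs <;> simp_all
  induction s using Finset.induction_on with
  | empty => simp [hμ₁]
  | insert i s hi ih =>
    have hPs : Monotone fun a ↦ ∀ i ∈ s, P i a := fun a b hab h i hi ↦ hP i hab (h i hi)
    have harris := fkg _ _ μ hμ₀ (ite_nonneg (P i))
      (ite_nonneg fun a ↦ ∀ i ∈ s, P i a) (ite_mono _ (hP i)) (ite_mono _ hPs) hμ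
    simp only [hμ₁, one_mul, mul_ite, mul_one, mul_zero, ← sum_filter, filter_filter] at harris
    simp only [prod_insert hi, forall_mem_insert, and_comm (a := P i _)]
    exact (mul_le_mul_of_nonneg_left ih <| sum_nonneg fun a _ ↦ hμ₀ a).trans harris

end Correlation

section BernoulliWeight

variable {V ι : Type*} [Fintype V] [DecidableEq V]

/-- The probability of drawing `S` when each `v : V` is included independently with
probability `p v`. The inclusion probabilities vary with `v` so that a uniform random set
conditioned to avoid a given set is covered as well. -/
def bernoulliWeight (p : V → ℝ) (S : Finset V) : ℝ :=
  ∏ v, if v ∈ S then p v else 1 - p v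

theorem bernoulliWeight_nonneg {p : V → ℝ} (hp₀ : ∀ v, 0 ≤ p v) (hp₁ : ∀ v, p v ≤ 1) :
    0 ≤ bernoulliWeight p := fun S ↦
  prod_nonneg fun v _ ↦ by split_ifs; exacts [hp₀ v, sub_nonneg.2 (hp₁ v)]

theorem sum_bernoulliWeight_mul_prod (p x : V → ℝ) :
    ∑ S, bernoulliWeight p S * ∏ v ∈ S, x v = ∏ v, (p v * x v + (1 - p v)) := by
  rw [Fintype.prod_add]
  refine sum_congr rfl fun S _ ↦ ?_
  rw [bernoulliWeight, ← prod_mul_prod_compl S, prod_mul_distrib,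
    prod_congr rfl fun v hv ↦ if_pos hv, prod_congr rfl fun v hv ↦ if_neg (mem_compl.1 hv)]
  ring

theorem sum_bernoulliWeight (p : V → ℝ) : ∑ S, bernoulliWeight p S = 1 := by
  simpa using sum_bernoulliWeight_mul_prod p 1

theorem bernoulliWeight_mul_bernoulliWeight (p : V → ℝ) (S T : Finset V) :
    bernoulliWeight p S * bernoulliWeight p T =
      bernoulliWeight p (S ⊓ T) * bernoulliWeight p (S ⊔ T) := by
  simp only [bernoulliWeight, ← prod_mul_distrib]
  refine prod_congr rfl fun v _ ↦ ?_
  by_cases hS : v ∈ S <;> by_cases hT : v ∈ T <;> simp [hS, hT, mul_comm]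

theorem prod_one_sub_mul_bernoulliWeight_ite (p : V → ℝ) (W S : Finset V) :
    (∏ v ∈ W, (1 - p v)) * bernoulliWeight (fun v ↦ if v ∈ W then 0 else p v) S =
      if Disjoint S W then bernoulliWeight p S else 0 := by
  split_ifs with hSW
  · rw [bernoulliWeight, bernoulliWeight, ← Fintype.prod_ite_mem, ← prod_mul_distrib]
    refine prod_congr rfl fun v _ ↦ ?_
    have hv : v ∈ S → v ∉ W := fun h ↦ disjoint_left.1 hSW h
    by_cases hS : v ∈ S <;> by_cases hW : v ∈ W <;> simp_all
  · obtain ⟨v, hS, hW⟩ := not_disjoint_iff.1 hSW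
    rw [bernoulliWeight, prod_eq_zero (mem_univ v) (by simp [hS, hW]), mul_zero]

theorem one_sub_two_mul_prod_le_sum_bernoulliWeight {p : V → ℝ} (hp₀ : ∀ v, 0 ≤ p v)
    (hp₁ : ∀ v, p v ≤ 1) (U : Finset V) :
    1 - 2 * ∏ v ∈ U, (1 - p v / 2) ≤ ∑ S with 2 ≤ #(S ∩ U), bernoulliWeight p S := by
  have generating : ∑ S, bernoulliWeight p S * (1 / 2) ^ #(S ∩ U) = ∏ v ∈ U, (1 - p v / 2) := by
    have hprod := sum_bernoulliWeight_mul_prod p fun v ↦ if v ∈ U then 1 / 2 else 1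
    simp only [prod_ite_mem, prod_const] at hprod
    rw [hprod, ← Fintype.prod_ite_mem U]
    refine prod_congr rfl fun v _ ↦ ?_
    split_ifs <;> ring
  have one_sub_le (n : ℕ) : 1 - 2 * (1 / 2 : ℝ) ^ n ≤ if 2 ≤ n then 1 else 0 := by
    rcases n with _ | _ | n <;> norm_num
  -- Markov's inequality for the random variable `(1 / 2) ^ #(S ∩ U)`.
  calc 1 - 2 * ∏ v ∈ U, (1 - p v / 2)
      = ∑ S, bernoulliWeight p S * (1 - 2 * (1 / 2) ^ #(S ∩ U)) := by
        simp only [mul_sub, sum_sub_distrib, mul_one, sum_bernoulliWeight, mul_left_comm _ (2 : ℝ),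
          ← mul_sum, generating]
    _ ≤ ∑ S, bernoulliWeight p S * if 2 ≤ #(S ∩ U) then 1 else 0 :=
        sum_le_sum fun S _ ↦ mul_le_mul_of_nonneg_left (one_sub_le _)
          (bernoulliWeight_nonneg hp₀ hp₁ S)
    _ = ∑ S with 2 ≤ #(S ∩ U), bernoulliWeight p S := by simp [sum_filter]

theorem pow_mul_prod_le_sum_bernoulliWeight {p : ℝ} (hp₀ : 0 ≤ p) (hp₁ : p ≤ 1) (W : Finset V)
    (U : ι → Finset V) (R : Finset ι) (hR : ∀ m ∈ R, 2 * (1 - p / 2) ^ #(U m \ W) ≤ 1) :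
    (1 - p) ^ #W * ∏ m ∈ R, (1 - 2 * (1 - p / 2) ^ #(U m \ W)) ≤
      ∑ S with Disjoint S W ∧ ∀ m ∈ R, 2 ≤ #(S ∩ U m), bernoulliWeight (fun _ ↦ p) S := by
  set q : V → ℝ := fun v ↦ if v ∈ W then 0 else p with hq
  have hq₀ (v : V) : 0 ≤ q v := by simp only [hq]; split_ifs <;> simp [hp₀]
  have hq₁ (v : V) : q v ≤ 1 := by simp only [hq]; split_ifs <;> simp [hp₁]
  have prod_eq (m : ι) : ∏ v ∈ U m, (1 - q v / 2) = (1 - p / 2) ^ #(U m \ W) := by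
    rw [← prod_const, ← filter_notMem_eq_sdiff, prod_filter]
    refine prod_congr rfl fun v _ ↦ ?_
    by_cases hv : v ∈ W <;> simp [hq, hv]
  have hMono (m : ι) : Monotone fun S : Finset V ↦ 2 ≤ #(S ∩ U m) := fun S T hST h ↦
    h.trans <| card_le_card <| inter_subset_inter_right hST
  calc (1 - p) ^ #W * ∏ m ∈ R, (1 - 2 * (1 - p / 2) ^ #(U m \ W))
      ≤ (1 - p) ^ #W * ∏ m ∈ R, ∑ S with 2 ≤ #(S ∩ U m), bernoulliWeight q S := by
        refine mul_le_mul_of_nonneg_left (prod_le_prod (fun m hm ↦ sub_nonneg.2 (hR m hm))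
          fun m _ ↦ ?_) (pow_nonneg (sub_nonneg.2 hp₁) _)
        rw [← prod_eq]
        exact one_sub_two_mul_prod_le_sum_bernoulliWeight hq₀ hq₁ (U m)
    _ ≤ (1 - p) ^ #W * ∑ S with ∀ m ∈ R, 2 ≤ #(S ∩ U m), bernoulliWeight q S :=
        mul_le_mul_of_nonneg_left (prod_sum_le_sum_forall_of_monotone
          (bernoulliWeight_nonneg hq₀ hq₁) (sum_bernoulliWeight q)
          (fun S T ↦ (bernoulliWeight_mul_bernoulliWeight q S T).le) hMono R)
          (pow_nonneg (sub_nonneg.2 hp₁) _)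
    _ = ∑ S with Disjoint S W ∧ ∀ m ∈ R, 2 ≤ #(S ∩ U m), bernoulliWeight (fun _ ↦ p) S := by
        simp only [← prod_const, mul_sum, hq, prod_one_sub_mul_bernoulliWeight_ite (fun _ ↦ p),
          and_comm, ← sum_filter, filter_filter]

end BernoulliWeight

section Absorption

variable {V ι : Type*} [DecidableEq V]

theorem exists_superset_card_biUnion_le [Finite ι] [DecidableEq ι] (U : ι → Finset V) (t : ℕ)
    (A : Finset ι) :
    ∃ B, A ⊆ B ∧ #(B.biUnion U) ≤ #(A.biUnion U) + t * #(B \ A) ∧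
      ∀ m ∉ B, t < #(U m \ B.biUnion U) := by
  have := Fintype.ofFinite ι
  let cheap : Finset (Finset ι) :=
    {B | A ⊆ B ∧ #(B.biUnion U) ≤ #(A.biUnion U) + t * #(B \ A)}
  obtain ⟨B, hB, hmax⟩ := cheap.exists_max_image card ⟨A, by simp [cheap]⟩
  simp only [cheap, mem_filter, mem_univ, true_and] at hB hmax
  refine ⟨B, hB.1, hB.2, fun m hm ↦ ?_⟩
  by_contra! hle
  have hmA : m ∉ A := fun h ↦ hm (hB.1 h)
  have hunion : #((insert m B).biUnion U) ≤ #(U m \ B.biUnion U) + #(B.biUnion U) := by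
    rw [biUnion_insert, ← sdiff_union_self_eq_union]
    exact card_union_le _ _
  have hcard : #(insert m B \ A) = #(B \ A) + 1 := by
    rw [insert_sdiff_of_notMem _ hmA, card_insert_of_notMem (by simp [hm])]
  have := hmax (insert m B) ⟨hB.1.trans (subset_insert _ _), by rw [hcard, mul_add]; omega⟩
  rw [card_insert_of_notMem hm] at this
  omega

theorem exists_monotone_card_biUnion_le [Finite ι] [DecidableEq ι] (U : ι → Finset V)
    (t : ℕ → ℕ) :
    ∃ A : ℕ → Finset ι, Monotone A ∧ #((A 0).biUnion U) ≤ t 0 * #(A 0) ∧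
      (∀ j, #((A (j + 1)).biUnion U) ≤ #((A j).biUnion U) + t (j + 1) * #(A (j + 1) \ A j)) ∧
      ∀ j, ∀ m ∉ A j, t j < #(U m \ (A j).biUnion U) := by
  choose next subset_next card_next lt_next using exists_superset_card_biUnion_le U
  let A : ℕ → Finset ι := Nat.rec (next (t 0) ∅) fun j B ↦ next (t (j + 1)) B
  refine ⟨A, monotone_nat_of_le_succ fun j ↦ subset_next _ _, ?_, fun j ↦ card_next _ _, ?_⟩
  · simpa [A] using card_next (t 0) ∅
  · rintro (_ | j) <;> exact lt_next _ _

theorem exists_rank_le_iff_mem {A : ℕ → Finset ι} (hA : Monotone A) (hex : ∀ m, ∃ j, m ∈ A j) :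
    ∃ rank : ι → ℕ, ∀ m j, rank m ≤ j ↔ m ∈ A j := by
  classical
  exact ⟨fun m ↦ Nat.find (hex m), fun m j ↦ (Nat.find_le_iff _ _).trans
    ⟨fun ⟨_, hij, hi⟩ ↦ hA hij hi, fun h ↦ ⟨j, le_rfl, h⟩⟩⟩

theorem exists_rank_card_biUnion_le [Fintype ι] (U : ι → Finset V) (t : ℕ → ℕ)
    (ht : ∀ m, ∃ j, #(U m) ≤ t j) :
    ∃ rank : ι → ℕ, ∀ j,
      #(({m | rank m ≤ j} : Finset ι).biUnion U) ≤ ∑ m with rank m ≤ j, t (rank m) ∧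
      ∀ m, j < rank m →
        t (rank m - 1) < #(U m \ ({m | rank m ≤ j} : Finset ι).biUnion U) := by
  classical
  obtain ⟨A, hA, hzero, hsucc, hres⟩ := exists_monotone_card_biUnion_le U t
  have hex (m : ι) : ∃ j, m ∈ A j := by
    obtain ⟨j, hj⟩ := ht m
    exact ⟨j, by_contra fun h ↦ (hres j m h).not_ge ((card_le_card sdiff_subset).trans hj)⟩
  obtain ⟨rank, hrank⟩ := exists_rank_le_iff_mem hA hex
  have hsum (j : ℕ) (B : Finset ι) (hB : ∀ m ∈ B, rank m = j) :
      t j * #B = ∑ m ∈ B, t (rank m) := by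
    rw [sum_congr rfl fun m hm ↦ by rw [hB m hm], sum_const, smul_eq_mul, mul_comm]
  refine ⟨rank, fun j ↦ ?_⟩
  rw [show ({m | rank m ≤ j} : Finset ι) = A j by ext m; simp [hrank]]
  refine ⟨?_, fun m hm ↦ ?_⟩
  · induction j with
    | zero => exact hzero.trans_eq <| hsum 0 _ fun m hm ↦ Nat.le_zero.1 ((hrank m 0).2 hm)
    | succ j ih =>
      have hnew : ∀ m ∈ A (j + 1) \ A j, rank m = j + 1 := fun m hm ↦ by
        rw [mem_sdiff, ← hrank, ← hrank] at hm
        omega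
      rw [← sum_sdiff (hA j.le_succ), ← hsum _ _ hnew]
      exact (hsucc j).trans (by omega)
  · have hm' : m ∉ A (rank m - 1) := by rw [← hrank]; omega
    exact (hres _ m hm').trans_le <| card_le_card <| sdiff_subset_sdiff subset_rfl <|
      biUnion_subset_biUnion_of_subset_left _ <| hA <| by omega

end Absorption

section Estimates

theorem sum_half_pow_dist_le_four (i L : ℕ) :
    ∑ j ∈ range L, (1 / 2 : ℝ) ^ Nat.dist i j ≤ 4 := by
  have below : ∑ j ∈ range (i + 1), (1 / 2 : ℝ) ^ Nat.dist i j ≤ 2 := by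
    rw [← sum_range_reflect]
    refine (sum_congr rfl fun j hj ↦ ?_).trans_le (sum_geometric_two_le (i + 1))
    congr 1
    rw [mem_range] at hj
    simp only [Nat.dist]
    omega
  have above : ∑ j ∈ Ico i L, (1 / 2 : ℝ) ^ Nat.dist i j ≤ 2 := by
    rw [sum_Ico_eq_sum_range]
    refine (sum_congr rfl fun j _ ↦ ?_).trans_le (sum_geometric_two_le (L - i))
    congr 1
    simp only [Nat.dist]
    omega
  have cover : range L ⊆ range (i + 1) ∪ Ico i L := fun j ↦ by
    simp only [mem_union, mem_range, mem_Ico]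
    omega
  calc ∑ j ∈ range L, (1 / 2 : ℝ) ^ Nat.dist i j
      ≤ ∑ j ∈ range (i + 1) ∪ Ico i L, (1 / 2 : ℝ) ^ Nat.dist i j :=
        sum_le_sum_of_subset_of_nonneg cover fun _ _ _ ↦ by positivity
    _ ≤ ∑ j ∈ range (i + 1), (1 / 2 : ℝ) ^ Nat.dist i j +
          ∑ j ∈ Ico i L, (1 / 2 : ℝ) ^ Nat.dist i j := by
        rw [← sum_union_inter]
        exact le_add_of_nonneg_right (sum_nonneg fun _ _ ↦ by positivity)
    _ ≤ 4 := by linarith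

theorem exists_mul_sum_half_pow_dist_le {ι : Type*} [Fintype ι] (rank : ι → ℕ) {L : ℕ}
    (hL : 0 < L) (hι : 64 * Fintype.card ι ≤ L ^ 2) :
    ∃ j < L, 16 * ∑ m, (1 / 2 : ℝ) ^ Nat.dist (rank m) j ≤ L := by
  have total : ∑ j ∈ range L, 16 * ∑ m, (1 / 2 : ℝ) ^ Nat.dist (rank m) j ≤
      ∑ _j ∈ range L, (L : ℝ) :=
    calc ∑ j ∈ range L, 16 * ∑ m, (1 / 2 : ℝ) ^ Nat.dist (rank m) j
        = 16 * ∑ m, ∑ j ∈ range L, (1 / 2 : ℝ) ^ Nat.dist (rank m) j := by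
          rw [← mul_sum, sum_comm]
      _ ≤ 16 * ∑ _m : ι, 4 := by gcongr; exact sum_half_pow_dist_le_four _ _
      _ = (64 * Fintype.card ι : ℕ) := by
          rw [sum_const, card_univ, nsmul_eq_mul]; push_cast; ring
      _ ≤ (L ^ 2 : ℕ) := by exact_mod_cast hι
      _ = ∑ _j ∈ range L, (L : ℝ) := by simp [sq]
  obtain ⟨j, hj, hle⟩ := exists_le_of_sum_le (nonempty_range_iff.2 hL.ne') total
  exact ⟨j, mem_range.1 hj, hle⟩

theorem exp_neg_two_mul_le_one_sub {x : ℝ} (hx₀ : 0 ≤ x) (hx₁ : x ≤ 1 / 2) :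
    Real.exp (-2 * x) ≤ 1 - x := by
  rw [neg_mul, Real.exp_neg]
  refine inv_le_of_inv_le₀ (by linarith) (le_trans ?_ (Real.add_one_le_exp (2 * x)))
  rw [inv_le_iff_one_le_mul₀ (by linarith)]
  nlinarith

theorem exp_neg_two_mul_le_one_sub_pow {p : ℝ} (hp₀ : 0 ≤ p) (hp₁ : p ≤ 1 / 2) (n : ℕ) :
    Real.exp (-2 * (p * n)) ≤ (1 - p) ^ n :=
  calc Real.exp (-2 * (p * n)) = Real.exp (-2 * p) ^ n := by rw [← Real.exp_nat_mul]; ring_nf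
    _ ≤ (1 - p) ^ n := by gcongr; exact exp_neg_two_mul_le_one_sub hp₀ hp₁

theorem exp_neg_le_pow_mul_prod {ι : Type*} {p c : ℝ} {n : ℕ} {R : Finset ι} {y : ι → ℝ}
    (hp₀ : 0 ≤ p) (hp₁ : p ≤ 1 / 2) (hy₀ : ∀ m ∈ R, 0 ≤ y m) (hy₁ : ∀ m ∈ R, y m ≤ 1 / 2)
    (hc : 2 * (p * n + ∑ m ∈ R, y m) ≤ c) :
    Real.exp (-c) ≤ (1 - p) ^ n * ∏ m ∈ R, (1 - y m) :=
  calc Real.exp (-c) ≤ Real.exp (-2 * (p * n)) * ∏ m ∈ R, Real.exp (-2 * y m) := by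
        rw [← Real.exp_sum, ← mul_sum, ← Real.exp_add, Real.exp_le_exp]
        linarith
    _ ≤ (1 - p) ^ n * ∏ m ∈ R, (1 - y m) :=
        mul_le_mul (exp_neg_two_mul_le_one_sub_pow hp₀ hp₁ n)
          (prod_le_prod (fun _ _ ↦ (Real.exp_pos _).le) fun m hm ↦
            exp_neg_two_mul_le_one_sub (hy₀ m hm) (hy₁ m hm))
          (prod_nonneg fun _ _ ↦ (Real.exp_pos _).le) (pow_nonneg (by linarith) n)

theorem one_sub_pow_le_exp_neg_mul {x : ℝ} (hx : x ≤ 1) (n : ℕ) :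
    (1 - x) ^ n ≤ Real.exp (-(x * n)) :=
  calc (1 - x) ^ n ≤ Real.exp (-x) ^ n :=
        pow_le_pow_left₀ (sub_nonneg.2 hx) (Real.one_sub_le_exp_neg x) n
    _ = Real.exp (-(x * n)) := by rw [← Real.exp_nat_mul]; ring_nf

theorem two_mul_one_sub_half_pow_le {p x : ℝ} {r : ℕ} (hp : p ≤ 2) (hx : 0 < x)
    (hr : 4 / x ≤ p * r) : 2 * (1 - p / 2) ^ r ≤ x := by
  have hexp : 2 / x ≤ Real.exp (2 / x) := by linarith [Real.add_one_le_exp (2 / x)]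
  calc 2 * (1 - p / 2) ^ r ≤ 2 * Real.exp (-(p / 2 * r)) := by
        gcongr
        exact one_sub_pow_le_exp_neg_mul (by linarith) r
    _ ≤ 2 * Real.exp (-(2 / x)) := by
        gcongr
        linarith [show 4 / x = 2 * (2 / x) by ring]
    _ ≤ 2 * (2 / x)⁻¹ := by
        rw [Real.exp_neg]
        gcongr
    _ = x := by field_simp

theorem half_pow_succ_mul_two_pow_of_le {i j : ℕ} (h : i ≤ j) :
    (1 / 2 : ℝ) ^ (j + 1) * (16 * 2 ^ i) = 8 * (1 / 2) ^ Nat.dist i j := by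
  obtain ⟨d, rfl⟩ := Nat.exists_eq_add_of_le h
  rw [Nat.dist_eq_sub_of_le h, Nat.add_sub_cancel_left, add_assoc, pow_add, one_div_pow]
  field_simp
  ring

theorem four_div_half_pow_dist_of_lt {i j : ℕ} (h : j < i) :
    4 / (1 / 2 : ℝ) ^ Nat.dist i j = (1 / 2) ^ (j + 1) * (16 * 2 ^ (i - 1)) := by
  obtain ⟨d, rfl⟩ := Nat.exists_eq_add_of_lt h
  rw [Nat.dist_eq_sub_of_le_right h.le, Nat.add_sub_cancel, add_assoc j d 1,
    Nat.add_sub_cancel_left]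
  simp only [one_div_pow, pow_add]
  field_simp
  norm_num

theorem le_mul_two_pow_of_half_pow_mul_le {j L n : ℕ} (hj : j < L)
    (h : (1 / 2 : ℝ) ^ (j + 1) * n ≤ L) : n ≤ L * 2 ^ L := by
  rw [one_div_pow, one_div_mul_eq_div, div_le_iff₀ (by positivity)] at h
  calc n ≤ L * 2 ^ (j + 1) := by exact_mod_cast h
    _ ≤ L * 2 ^ L := by gcongr; exacts [one_le_two, hj]

end Estimates

section Scale

variable {V ι : Type*} [DecidableEq V] [Fintype ι]

theorem exists_scale [DecidableEq ι] (U : ι → Finset V) {L : ℕ} (hL : 0 < L)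
    (hι : 64 * Fintype.card ι ≤ L ^ 2) :
    ∃ j < L, ∃ A : Finset ι,
      (∀ m ∉ A, 2 * (1 - (1 / 2 : ℝ) ^ (j + 1) / 2) ^ #(U m \ A.biUnion U) ≤ 1 / 2) ∧
      2 * ((1 / 2 : ℝ) ^ (j + 1) * #(A.biUnion U) +
        ∑ m ∈ Aᶜ, 2 * (1 - (1 / 2) ^ (j + 1) / 2) ^ #(U m \ A.biUnion U)) ≤ L := by
  have large (m : ι) : ∃ j, #(U m) ≤ 16 * 2 ^ j :=
    ⟨#(U m), by have := (#(U m)).lt_two_pow_self; omega⟩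
  obtain ⟨rank, hrank⟩ := exists_rank_card_biUnion_le U (fun j ↦ 16 * 2 ^ j) large
  obtain ⟨j, hj, hcost⟩ := exists_mul_sum_half_pow_dist_le rank hL hι
  obtain ⟨hlow, hhigh⟩ := hrank j
  set A : Finset ι := {m | rank m ≤ j} with hA
  set W := A.biUnion U
  set p : ℝ := (1 / 2) ^ (j + 1)
  set cost : ι → ℝ := fun m ↦ (1 / 2) ^ Nat.dist (rank m) j with hc
  have hp : p ≤ 2 := (pow_le_one₀ (by norm_num) (by norm_num)).trans one_le_two
  have cost_low : p * #W ≤ 8 * ∑ m ∈ A, cost m :=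
    calc p * #W ≤ p * ∑ m ∈ A, 16 * 2 ^ rank m := by gcongr; exact_mod_cast hlow
      _ = 8 * ∑ m ∈ A, cost m := by
        rw [mul_sum, mul_sum]
        exact sum_congr rfl fun m hm ↦
          half_pow_succ_mul_two_pow_of_le (by simpa [hA] using hm)
  have lt_rank (m : ι) (hm : m ∉ A) : j < rank m := by simpa [hA] using hm
  have cost_high (m : ι) (hm : m ∉ A) : 2 * (1 - p / 2) ^ #(U m \ W) ≤ cost m := by
    refine two_mul_one_sub_half_pow_le hp (by positivity) ?_
    rw [hc, four_div_half_pow_dist_of_lt (lt_rank m hm)]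
    gcongr
    exact_mod_cast (hhigh m (lt_rank m hm)).le
  have cost_le (m : ι) (hm : m ∉ A) : cost m ≤ 1 / 2 := by
    refine pow_le_of_le_one (by norm_num) (by norm_num) ?_
    rw [Nat.dist_eq_sub_of_le_right (lt_rank m hm).le]
    exact Nat.sub_ne_zero_of_lt (lt_rank m hm)
  refine ⟨j, hj, A, fun m hm ↦ (cost_high m hm).trans (cost_le m hm), ?_⟩
  have sum_high : ∑ m ∈ Aᶜ, 2 * (1 - p / 2) ^ #(U m \ W) ≤ ∑ m ∈ Aᶜ, cost m :=
    sum_le_sum fun m hm ↦ cost_high m (mem_compl.1 hm)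
  have hsplit : ∑ m ∈ A, cost m + ∑ m ∈ Aᶜ, cost m = ∑ m, cost m := sum_add_sum_compl A cost
  have hcompl : 0 ≤ ∑ m ∈ Aᶜ, cost m := sum_nonneg fun m _ ↦ by positivity
  linarith

theorem exists_exp_neg_le_sum_bernoulliWeight [Fintype V] (U : ι → Finset V) {L : ℕ} (hL : 0 < L)
    (hι : 64 * Fintype.card ι ≤ L ^ 2) :
    ∃ j < L, Real.exp (-L) ≤
      ∑ S with ∀ m, #(S ∩ U m) ≠ 1 ∧ (L * 2 ^ L < #(U m) → (S ∩ U m).Nonempty),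
        bernoulliWeight (fun _ ↦ (1 / 2) ^ (j + 1)) S := by
  classical
  obtain ⟨j, hj, A, hmiss, hcost⟩ := exists_scale U hL hι
  have hp₀ : (0 : ℝ) ≤ (1 / 2) ^ (j + 1) := by positivity
  have hp₁ : ((1 : ℝ) / 2) ^ (j + 1) ≤ 1 / 2 :=
    pow_le_of_le_one (by norm_num) (by norm_num) j.succ_ne_zero
  set p : ℝ := (1 / 2) ^ (j + 1)
  set W := A.biUnion U
  have miss_nonneg (m : ι) : 0 ≤ 2 * (1 - p / 2) ^ #(U m \ W) :=
    mul_nonneg zero_le_two (pow_nonneg (by linarith) _)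
  have hW : #W ≤ L * 2 ^ L := by
    have := sum_nonneg fun m (_ : m ∈ Aᶜ) ↦ miss_nonneg m
    have := mul_nonneg hp₀ (#W).cast_nonneg
    exact le_mul_two_pow_of_half_pow_mul_le hj (by linarith)
  refine ⟨j, hj, (exp_neg_le_pow_mul_prod hp₀ hp₁ (fun m _ ↦ miss_nonneg m)
    (fun m hm ↦ hmiss m (mem_compl.1 hm)) hcost).trans <|
    (pow_mul_prod_le_sum_bernoulliWeight hp₀ (by linarith) W U Aᶜ fun m hm ↦
      (hmiss m (mem_compl.1 hm)).trans (by norm_num)).trans <|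
    sum_le_sum_of_subset_of_nonneg (fun S hS ↦ mem_filter.2 ⟨mem_univ S, fun m ↦ ?_⟩)
      fun S _ _ ↦ bernoulliWeight_nonneg (fun _ ↦ hp₀) (fun _ ↦ by linarith) S⟩
  obtain ⟨hdisj, htwo⟩ : Disjoint S W ∧ ∀ m ∈ Aᶜ, 2 ≤ #(S ∩ U m) := by simpa using hS
  by_cases hm : m ∈ A
  · have hUW : U m ⊆ W := subset_biUnion_of_mem U hm
    have hSm : S ∩ U m = ∅ := disjoint_iff_inter_eq_empty.1 (hdisj.mono_right hUW)
    exact ⟨by simp [hSm], fun h ↦ absurd ((card_le_card hUW).trans hW) h.not_ge⟩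
  · have := htwo m (mem_compl.2 hm)
    exact ⟨by omega, fun _ ↦ card_pos.1 (by omega)⟩

end Scale

theorem exists_weight_forall_le_sum {V : Type*} [Fintype V] [DecidableEq V] {L k : ℕ} (hL : 0 < L)
    (hk : 64 * (k + 1) ≤ L ^ 2) (hV : L * 2 ^ L < Fintype.card V) :
    ∃ μ : Finset V → ℝ, 0 ≤ μ ∧ ∑ S, μ S = 1 ∧ ∀ U : Fin k → Finset V,
      Real.exp (-L) / L ≤ ∑ S with S.Nonempty ∧ ∀ m, #(S ∩ U m) ≠ 1, μ S := by
  have weight_nonneg (j : ℕ) (S : Finset V) : 0 ≤ bernoulliWeight (fun _ ↦ (1 / 2) ^ (j + 1)) S :=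
    bernoulliWeight_nonneg (fun _ ↦ by positivity)
      (fun _ ↦ pow_le_one₀ (by norm_num) (by norm_num)) S
  refine ⟨fun S ↦ (∑ j ∈ range L, bernoulliWeight (fun _ ↦ (1 / 2) ^ (j + 1)) S) / L,
    fun S ↦ div_nonneg (sum_nonneg fun j _ ↦ weight_nonneg j S) L.cast_nonneg, ?_, fun U ↦ ?_⟩
  · rw [← sum_div, sum_comm]
    simp [sum_bernoulliWeight, hL.ne']
  -- Adjoining `univ` as one more set makes the random set nonempty.
  obtain ⟨j, hj, hle⟩ := exists_exp_neg_le_sum_bernoulliWeight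
    (fun o : Option (Fin k) ↦ o.elim univ U) hL (by simpa using hk)
  rw [← sum_div, sum_comm]
  refine div_le_div_of_nonneg_right (hle.trans ?_) L.cast_nonneg
  refine le_trans ?_ <| single_le_sum (fun j _ ↦ sum_nonneg fun S _ ↦ weight_nonneg j S)
    (mem_range.2 hj)
  refine sum_le_sum_of_subset_of_nonneg (fun S hS ↦ mem_filter.2 ⟨mem_univ S, ?_⟩)
    fun S _ _ ↦ weight_nonneg j S
  replace hS := (mem_filter.1 hS).2
  exact ⟨by simpa using (hS none).2 hV, fun m ↦ (hS (some m)).1⟩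

theorem exists_fin_forall_exists_of_le_sum {Ω X : Type*} [Fintype Ω] [Fintype X] {μ : Ω → ℝ}
    (hμ₀ : 0 ≤ μ) (hμ₁ : ∑ w, μ w = 1) {G : X → Ω → Prop} [∀ x, DecidablePred (G x)] {δ : ℝ}
    (hG : ∀ x, δ ≤ ∑ w with G x w, μ w) {M : ℕ} (hM : Fintype.card X * (1 - δ) ^ M < 1) :
    ∃ f : Fin M → Ω, ∀ x, ∃ a, G x (f a) := by
  by_contra! hfail
  let ν (x : X) (w : Ω) : ℝ := if G x w then 0 else μ w
  have ν_nonneg (x : X) (w : Ω) : 0 ≤ ν x w := by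
    simp only [ν]
    split_ifs
    exacts [le_rfl, hμ₀ w]
  have sum_ν (x : X) : ∑ w, ν x w ≤ 1 - δ := by
    have := sum_filter_add_sum_filter_not univ (G x) μ
    have hν : ∑ w, ν x w = ∑ w with ¬ G x w, μ w := by simp only [ν, sum_filter, ite_not]
    linarith [hG x]
  refine hM.not_ge ?_
  calc 1 = ∑ f : Fin M → Ω, ∏ a, μ (f a) := by rw [← Fintype.sum_pow, hμ₁, one_pow]
    _ ≤ ∑ f : Fin M → Ω, ∑ x, ∏ a, ν x (f a) := sum_le_sum fun f _ ↦ by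
        obtain ⟨x, hx⟩ := hfail f
        calc ∏ a, μ (f a) = ∏ a, ν x (f a) := by simp [ν, hx]
          _ ≤ ∑ x, ∏ a, ν x (f a) :=
            single_le_sum (f := fun x ↦ ∏ a, ν x (f a))
              (fun x _ ↦ prod_nonneg fun a _ ↦ ν_nonneg x (f a)) (mem_univ x)
    _ = ∑ x, (∑ w, ν x w) ^ M := by simp only [Fintype.sum_pow, sum_comm (s := univ (α := X))]
    _ ≤ ∑ _x : X, (1 - δ) ^ M := by
        gcongr with x
        exacts [sum_nonneg fun w _ ↦ ν_nonneg x w, sum_ν x]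
    _ = Fintype.card X * (1 - δ) ^ M := by simp

theorem two_pow_mul_one_sub_pow_lt_one {n M : ℕ} {δ : ℝ} (hδ : δ ≤ 1) (h : n < δ * M) :
    2 ^ n * (1 - δ) ^ M < 1 := by
  have htwo : (2 : ℝ) ≤ Real.exp 1 := by linarith [Real.add_one_le_exp 1]
  calc 2 ^ n * (1 - δ) ^ M ≤ Real.exp 1 ^ n * Real.exp (-(δ * M)) := by
        gcongr
        exact one_sub_pow_le_exp_neg_mul hδ M
    _ = Real.exp (n - δ * M) := by rw [← Real.exp_nat_mul, ← Real.exp_add]; ring_nf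
    _ < 1 := Real.exp_lt_one_iff.2 (by linarith)

namespace HasHBD

variable {α β : Type} [DecidableEq α] {V : Finset α} {I : Finset β} {e : β → Finset α} {k : ℕ}

theorem mono {l : ℕ} (hkl : k ≤ l) (h : HasHBD V I e k) : HasHBD V I e l := by
  obtain ⟨color, hcolor⟩ := h
  refine ⟨fun i ↦ (color i).castLE hkl, fun m ↦ ?_⟩
  by_cases hm : m < k
  · obtain ⟨U, hU, hcard⟩ := hcolor ⟨m, hm⟩
    exact ⟨U, hU, fun i hi him ↦ hcard i hi (Fin.ext <| by simpa using congrArg Fin.val him)⟩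
  · exact ⟨∅, empty_subset V, fun i _ him ↦ absurd (him ▸ (color i).isLt) hm⟩

theorem of_map {α' β' : Type} [DecidableEq α'] (g : α ↪ α') (h : β ↪ β') (he : ∀ i ∈ I, e i ⊆ V)
    (hHBD : HasHBD (V.map g) (I.map h)
      (Function.extend h (fun i ↦ (e i).map g) fun _ ↦ ∅) k) : HasHBD V I e k := by
  obtain ⟨color, hcolor⟩ := hHBD
  refine ⟨color ∘ h, fun m ↦ ?_⟩
  obtain ⟨U, -, hcard⟩ := hcolor m
  refine ⟨{v ∈ V | g v ∈ U}, filter_subset _ V, fun i hi him ↦ ?_⟩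
  rw [← hcard (h i) (mem_map_of_mem h hi) him, h.injective.extend_apply, ← card_map g]
  congr 1
  ext v
  simp only [mem_map, mem_inter, mem_filter]
  constructor
  · rintro ⟨w, ⟨⟨-, hwU⟩, hwe⟩, rfl⟩
    exact ⟨hwU, w, hwe, rfl⟩
  · rintro ⟨hvU, w, hwe, rfl⟩
    exact ⟨w, ⟨⟨he i hi hwe, hvU⟩, hwe⟩, rfl⟩

end HasHBD

theorem exists_nat_of_not_hasHBD {N M k : ℕ} {f : Fin M → Finset (Fin N)}
    (hf : ¬ HasHBD univ {a | (f a).Nonempty} f k) :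
    ∃ (V I : Finset ℕ) (e : ℕ → Finset ℕ), (∀ i ∈ I, e i ⊆ V) ∧ (∀ i ∈ I, (e i).Nonempty) ∧
      #V = N ∧ #I ≤ M ∧ ¬ HasHBD V I e k := by
  refine ⟨univ.map Fin.valEmbedding, ({a | (f a).Nonempty} : Finset (Fin M)).map Fin.valEmbedding,
    Function.extend Fin.valEmbedding (fun a ↦ (f a).map Fin.valEmbedding) fun _ ↦ ∅,
    forall_mem_map.2 fun a _ ↦ ?_, forall_mem_map.2 fun a ha ↦ ?_, by simp,
    (card_map _).trans_le (card_finset_fin_le _), fun h ↦ hf (h.of_map _ _ fun _ _ ↦ subset_univ _)⟩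
    <;> rw [Fin.valEmbedding.injective.extend_apply]
  exacts [map_subset_map.2 (subset_univ _), (mem_filter.1 ha).2.map]

theorem exists_not_hasHBD {V : Type} [Fintype V] [DecidableEq V] {L k M : ℕ} (hL : 0 < L)
    (hk : 64 * (k + 1) ≤ L ^ 2) (hV : L * 2 ^ L < Fintype.card V)
    (hM : (Fintype.card V * k : ℕ) < Real.exp (-L) / L * M) :
    ∃ f : Fin M → Finset V, ¬ HasHBD univ {a | (f a).Nonempty} f k := by
  obtain ⟨μ, hμ₀, hμ₁, hμ⟩ := exists_weight_forall_le_sum hL hk hV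
  have hδ : Real.exp (-L) / L ≤ 1 := div_le_one_of_le₀
    ((Real.exp_le_one_iff.2 (by simp)).trans (by exact_mod_cast hL)) L.cast_nonneg
  obtain ⟨f, hf⟩ := exists_fin_forall_exists_of_le_sum hμ₀ hμ₁ hμ
    (by simpa [pow_mul] using two_pow_mul_one_sub_pow_lt_one hδ hM)
  refine ⟨f, fun ⟨color, hcolor⟩ ↦ ?_⟩
  choose U _ hcard using hcolor
  obtain ⟨a, hne, ha⟩ := hf U
  exact ha (color a) <| by rw [inter_comm, hcard _ a (by simpa using hne) rfl]

theorem four_pow_mul_lt_exp_neg_div_mul {L k : ℕ} (hL : 0 < L) (hk : k ≤ L ^ 2) :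
    (4 ^ L * k : ℕ) < Real.exp (-L) / L * (128 ^ L : ℕ) := by
  have hexp : Real.exp L ≤ 4 ^ L := by
    rw [← Real.exp_one_pow]
    gcongr
    linarith [Real.exp_one_lt_d9]
  have hcube : L ^ 3 < 8 ^ L :=
    calc L ^ 3 < (2 ^ L) ^ 3 := Nat.pow_lt_pow_left L.lt_two_pow_self (by norm_num)
      _ = 8 ^ L := by rw [← pow_mul, mul_comm, pow_mul]; norm_num
  have hkL : (k * L : ℝ) < 8 ^ L := by
    exact_mod_cast (Nat.mul_le_mul_right L hk).trans_lt hcube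
  rw [Real.exp_neg, inv_eq_one_div, div_div, one_div_mul_eq_div, lt_div_iff₀ (by positivity)]
  push_cast
  calc (4 ^ L * k * (Real.exp L * L) : ℝ) = 4 ^ L * Real.exp L * (k * L) := by ring
    _ < 4 ^ L * 4 ^ L * 8 ^ L :=
        mul_lt_mul' (by gcongr) hkL (by positivity) (by positivity)
    _ = 128 ^ L := by rw [← mul_pow, ← mul_pow]; norm_num

theorem four_pow_add_le_two_pow {L i : ℕ} (hL : 0 < L) (hi : i ≤ 128 ^ L) :
    4 ^ L + i ≤ 2 ^ (8 * L) :=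
  calc 4 ^ L + i ≤ 128 ^ L + 128 ^ L := by gcongr; norm_num
    _ = 2 * 128 ^ L := (two_mul _).symm
    _ ≤ 2 ^ L * 128 ^ L := by gcongr; exact Nat.le_self_pow hL.ne' 2
    _ = 2 ^ (8 * L) := by rw [← mul_pow, pow_mul]; norm_num

theorem sq_logb_two_natCast_le {n a : ℕ} (hn : n ≤ 2 ^ a) : Real.logb 2 n ^ 2 ≤ a ^ 2 := by
  rcases n.eq_zero_or_pos with rfl | hpos
  · simp
  · gcongr
    · exact Real.logb_nonneg one_lt_two (by exact_mod_cast hpos)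
    · rw [Real.logb_le_iff_le_rpow one_lt_two (by exact_mod_cast hpos), Real.rpow_natCast]
      exact_mod_cast hn

theorem exists_not_hasHBD_four_pow {L k : ℕ} (hL : 0 < L) (hk : 64 * (k + 1) ≤ L ^ 2) :
    ∃ f : Fin (128 ^ L) → Finset (Fin (4 ^ L)),
      ¬ HasHBD univ {a | (f a).Nonempty} f k := by
  refine exists_not_hasHBD hL hk ?_ ?_ <;> rw [Fintype.card_fin]
  · calc L * 2 ^ L < 2 ^ L * 2 ^ L := by gcongr; exact L.lt_two_pow_self
      _ = 4 ^ L := by rw [← mul_pow]; norm_num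
  · exact four_pow_mul_lt_exp_neg_div_mul hL (by omega)

/-- Tightness part of Corollary 1.4: there are hypergraphs of arbitrarily large
combinatorial size `n` for which every HBD requires at least `c · (log₂ n)²` colors. -/
theorem hbd_lower_bound :
    ∃ c : ℝ, 0 < c ∧ ∀ n₀ : ℕ, ∃ n : ℕ, n₀ ≤ n ∧
      ∃ (Vset I : Finset ℕ) (e : ℕ → Finset ℕ),
        (∀ i ∈ I, e i ⊆ Vset) ∧ (∀ i ∈ I, (e i).Nonempty) ∧
        Vset.card + I.card = n ∧
        ∀ k : ℕ, HasHBD Vset I e k → c * (Real.logb 2 n) ^ 2 ≤ (k : ℝ) := by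
  refine ⟨1 / 64 ^ 2, by norm_num, fun n₀ ↦ ?_⟩
  obtain ⟨l, hl₀, hl⟩ : ∃ l, 0 < l ∧ n₀ ≤ l := ⟨n₀ + 1, n₀.succ_pos, n₀.le_succ⟩
  have hl_sq : 0 < l ^ 2 := by positivity
  obtain ⟨f, hf⟩ := exists_not_hasHBD_four_pow (L := 8 * l) (k := l ^ 2 - 1) (by omega)
    (by rw [mul_pow]; omega)
  obtain ⟨V, I, e, he, hne, hV, hI, hVI⟩ := exists_nat_of_not_hasHBD hf
  refine ⟨#V + #I, ?_, V, I, e, he, hne, rfl, fun k hk ↦ ?_⟩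
  · have := (8 * l).lt_pow_self (show 1 < 4 by norm_num)
    omega
  have hlk : l ^ 2 ≤ k := by
    by_contra! hlt
    exact hVI (hk.mono (by omega))
  have hlog := sq_logb_two_natCast_le (hV ▸ four_pow_add_le_two_pow (by omega) hI)
  calc (1 / 64 ^ 2 * Real.logb 2 (#V + #I : ℕ) ^ 2 : ℝ)
      ≤ 1 / 64 ^ 2 * (8 * (8 * l) : ℕ) ^ 2 := by gcongr
    _ = (l ^ 2 : ℕ) := by push_cast; ring
    _ ≤ k := by exact_mod_cast hlk
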